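/- Let X be an isotropic log-concave random vector in ℝ^d with density f. Then −log f(0) ≤ Ent(X) ≤ −log f(0) + d. -/

import Mathlib

open MeasureTheory Real

noncomputable def Ent {d : ℕ} (f : EuclideanSpace ℝ (Fin d) → ℝ) : ℝ :=
  - ∫ x, f x * Real.log (f x)

def IsDensity {d : ℕ} (f : EuclideanSpace ℝ (Fin d) → ℝ) : Prop :=
  (∀ x, 0 ≤ f x) ∧ Measurable f ∧ (∫ x, f x) = 1

def Isotropic {d : ℕ} (f : EuclideanSpace ℝ (Fin d) → ℝ) : Prop :=
  (∫ x, f x • x) = 0 ∧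
  ∀ i j : Fin d, (∫ x, f x * (x i * x j)) = if i = j then (1:ℝ) else 0

def LogConcave {d : ℕ} (f : EuclideanSpace ℝ (Fin d) → ℝ) : Prop :=
  ConvexOn ℝ Set.univ (fun x => -Real.log (f x))

/-- Expanding maps do not shrink Lebesgue measure too much. -/
lemma volume_preimage_le_of_antilipschitz {d : ℕ} {T : EuclideanSpace ℝ (Fin d) → EuclideanSpace ℝ (Fin d)}
    {K : NNReal} (hT : AntilipschitzWith K T) (s : Set (EuclideanSpace ℝ (Fin d))) :
    volume (T ⁻¹' s) ≤ (K : ENNReal) ^ d * volume s := by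
  have h1 := hT.hausdorffMeasure_preimage_le (d := (d : ℝ)) (Nat.cast_nonneg d) s
  have : (Measure.hausdorffMeasure (d : ℝ) : Measure (EuclideanSpace ℝ (Fin d))).IsAddHaarMeasure := by
    simpa using MeasureTheory.isAddHaarMeasure_hausdorffMeasure (E := EuclideanSpace ℝ (Fin d))
  have h2 := Measure.isAddLeftInvariant_eq_smul (volume : Measure (EuclideanSpace ℝ (Fin d)))
    (Measure.hausdorffMeasure (d : ℝ))
  rw [h2, Measure.smul_apply, Measure.smul_apply, ENNReal.smul_def, ENNReal.smul_def, smul_eq_mul,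
    smul_eq_mul, mul_left_comm]
  gcongr
  simpa using h1

/-- Core scaling estimate. -/
lemma scaling_lintegral {d : ℕ} {φ : EuclideanSpace ℝ (Fin d) → ℝ} (hφ : Continuous φ)
    {S : Set (EuclideanSpace ℝ (Fin d))} (hS : MeasurableSet S) (c t : ℝ) (ht : 0 < t)
    (T : EuclideanSpace ℝ (Fin d) → EuclideanSpace ℝ (Fin d)) (hTc : Continuous T)
    (hT : ∀ x y, t * ‖x - y‖ ≤ ‖T x - T y‖) (hTS : ∀ x ∈ S, T x ∈ S)
    (hTφ : ∀ x ∈ S, φ (T x) ≤ t * φ x + (1 - t) * c) :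
    ∫⁻ x in S, ENNReal.ofReal (exp (-(t * φ x + (1 - t) * c))) ≤
      ENNReal.ofReal (t⁻¹) ^ d * ∫⁻ x in S, ENNReal.ofReal (exp (-φ x)) := by
  have hanti : AntilipschitzWith (t⁻¹).toNNReal T := by
    apply AntilipschitzWith.of_le_mul_dist
    intro x y
    rw [dist_eq_norm, dist_eq_norm, Real.coe_toNNReal _ (by positivity), inv_mul_eq_div,
      le_div_iff₀ ht, mul_comm]
    exact hT x y
  have hmap : Measure.map T (volume.restrict S) ≤
      (ENNReal.ofReal (t⁻¹) ^ d) • (volume.restrict S) := by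
    refine Measure.le_iff.2 fun B hB => ?_
    rw [Measure.map_apply hTc.measurable hB, Measure.restrict_apply (hTc.measurable hB),
      Measure.smul_apply, Measure.restrict_apply hB, smul_eq_mul]
    calc volume (T ⁻¹' B ∩ S) ≤ volume (T ⁻¹' (B ∩ S)) :=
          measure_mono fun x hx => ⟨hx.1, hTS x hx.2⟩
      _ ≤ _ := volume_preimage_le_of_antilipschitz hanti _
  have hm : Measurable fun x => ENNReal.ofReal (exp (-φ x)) := by fun_prop
  calc ∫⁻ x in S, ENNReal.ofReal (exp (-(t * φ x + (1 - t) * c)))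
      ≤ ∫⁻ x in S, ENNReal.ofReal (exp (-φ (T x))) := by
        refine setLIntegral_mono' hS fun x hx => ?_
        have := hTφ x hx
        gcongr
    _ = ∫⁻ x, ENNReal.ofReal (exp (-φ x)) ∂(Measure.map T (volume.restrict S)) := by
        rw [lintegral_map hm hTc.measurable]
    _ ≤ ∫⁻ x, ENNReal.ofReal (exp (-φ x)) ∂((ENNReal.ofReal (t⁻¹) ^ d) • (volume.restrict S)) :=
        lintegral_mono' hmap le_rfl
    _ = _ := by rw [lintegral_smul_measure, smul_eq_mul]

lemma scaling_main {d : ℕ} {φ : EuclideanSpace ℝ (Fin d) → ℝ} (hφ : Continuous φ)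
    {S : Set (EuclideanSpace ℝ (Fin d))} (hS : MeasurableSet S) (c : ℝ)
    (hT : ∀ t : ℝ, 0 < t → t < 1 → ∃ T : EuclideanSpace ℝ (Fin d) → EuclideanSpace ℝ (Fin d),
      Continuous T ∧ (∀ x y, t * ‖x - y‖ ≤ ‖T x - T y‖) ∧ (∀ x ∈ S, T x ∈ S) ∧
      (∀ x ∈ S, φ (T x) ≤ t * φ x + (1 - t) * c))
    (hgint : IntegrableOn (fun x => exp (-φ x)) S)
    (k : EuclideanSpace ℝ (Fin d) → ℝ) (hk : IntegrableOn k S)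
    (hkφ : ∀ x ∈ S, k x ≤ exp (-φ x) * (φ x - c)) :
    IntegrableOn (fun x => exp (-φ x) * (φ x - c)) S ∧
      ∫ x in S, exp (-φ x) * (φ x - c) ≤ d * ∫ x in S, exp (-φ x) := by
  have hpt : ∀ t x, exp (-φ x) * (1 + (1 - t) * (φ x - c)) ≤ exp (-(t * φ x + (1 - t) * c)) := by
    intro t x
    have : -(t * φ x + (1 - t) * c) = -φ x + (1 - t) * (φ x - c) := by ring
    rw [this, exp_add]
    gcongr
    linarith [add_one_le_exp ((1 - t) * (φ x - c))]
  have hlin : ∀ t : ℝ, 0 < t → t < 1 →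
      IntegrableOn (fun x => exp (-(t * φ x + (1 - t) * c))) S ∧
      ∫ x in S, exp (-(t * φ x + (1 - t) * c)) ≤ (t⁻¹) ^ d * ∫ x in S, exp (-φ x) := by
    intro t ht0 ht1
    obtain ⟨T, h1, h2, h3, h4⟩ := hT t ht0 ht1
    have h := scaling_lintegral hφ hS c t ht0 T h1 h2 h3 h4
    have hI : IntegrableOn (fun x => exp (-(t * φ x + (1 - t) * c))) S := by
      refine ⟨by fun_prop, ?_⟩
      rw [hasFiniteIntegral_iff_ofReal (Filter.Eventually.of_forall fun x => (exp_pos _).le)]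
      refine h.trans_lt (ENNReal.mul_lt_top (by simp) ?_)
      rw [← hasFiniteIntegral_iff_ofReal (Filter.Eventually.of_forall fun x => (exp_pos _).le)]
      exact hgint.2
    refine ⟨hI, ?_⟩
    rw [← ofReal_integral_eq_lintegral_ofReal hI
      (Filter.Eventually.of_forall fun x => (exp_pos _).le),
      ← ofReal_integral_eq_lintegral_ofReal hgint
      (Filter.Eventually.of_forall fun x => (exp_pos _).le),
      ← ENNReal.ofReal_pow (by positivity), ← ENNReal.ofReal_mul (by positivity)] at h
    exact (ENNReal.ofReal_le_ofReal_iff (mul_nonneg (by positivity)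
      (integral_nonneg fun x => (exp_pos _).le))).1 h
  have hN : IntegrableOn (fun x => exp (-φ x) * (φ x - c)) S := by
    have h2 := (hlin (1/2) (by norm_num) (by norm_num)).1
    refine Integrable.mono' (hk.abs.add (h2.const_mul 2)) (by fun_prop) ?_
    refine (ae_restrict_iff' hS).2 (Filter.Eventually.of_forall fun x hx => ?_)
    have h3 := hpt (1/2) x
    have h4 := hkφ x hx
    have h5 := exp_pos (-φ x)
    have h6 := neg_abs_le (k x)
    have h7 := abs_nonneg (k x)
    have h8 := exp_pos (-((1/2) * φ x + (1 - 1/2) * c))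
    simp only [Pi.add_apply, Real.norm_eq_abs]
    rw [abs_le]
    constructor <;> nlinarith
  refine ⟨hN, ?_⟩
  set N := ∫ x in S, exp (-φ x) * (φ x - c) with hNdef
  set M := ∫ x in S, exp (-φ x) with hM
  have hM0 : 0 ≤ M := integral_nonneg fun x => (exp_pos _).le
  have key : ∀ t : ℝ, 0 < t → t < 1 → t ^ d * N ≤ d * M := by
    intro t ht0 ht1
    obtain ⟨hI, hle⟩ := hlin t ht0 ht1
    have h1 : M + (1 - t) * N ≤ (t⁻¹) ^ d * M := by
      refine le_trans ?_ hle
      rw [hM, hNdef, ← integral_const_mul, ← integral_add hgint (hN.const_mul _)]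
      refine integral_mono (hgint.add (hN.const_mul _)) hI fun x => ?_
      have := hpt t x
      simp only
      linarith
    have htd : 0 < t ^ d := by positivity
    have h2 : t ^ d * (M + (1 - t) * N) ≤ M := by
      calc _ ≤ t ^ d * ((t⁻¹) ^ d * M) := by gcongr
        _ = M := by rw [inv_pow]; field_simp
    have h3 := one_add_mul_le_pow (a := t - 1) (by linarith) d
    have h4 : (1 + d * (t - 1)) * M ≤ t ^ d * M := by
      have : 1 + (t - 1) = t := by ring
      rw [this] at h3
      gcongr
    have h5 : (1 - t) * (t ^ d * N) ≤ (1 - t) * (d * M) := by nlinarith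
    exact le_of_mul_le_mul_left h5 (by linarith)
  have hlim : Filter.Tendsto (fun t : ℝ => t ^ d * N) (nhdsWithin 1 (Set.Iio 1)) (nhds (1 ^ d * N)) := by
    apply Filter.Tendsto.mono_left _ nhdsWithin_le_nhds
    exact Continuous.tendsto (by fun_prop) 1
  rw [one_pow, one_mul] at hlim
  refine le_of_tendsto hlim ?_
  filter_upwards [Ioo_mem_nhdsLT (show (0:ℝ) < 1 by norm_num)] with t ht
  exact key t ht.1 ht.2

/-- Contraction towards the closed convex set `K`. -/
lemma exists_contraction {d : ℕ} {K : Set (EuclideanSpace ℝ (Fin d))} (hK : Convex ℝ K)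
    (hKc : IsClosed K) (hne : K.Nonempty) :
    ∃ P : EuclideanSpace ℝ (Fin d) → EuclideanSpace ℝ (Fin d),
      Continuous P ∧ (∀ x, P x ∈ K) ∧
      ∀ t : ℝ, 0 < t → t < 1 →
      (∀ x y, t * ‖x - y‖ ≤ ‖(t • x + (1 - t) • P x) - (t • y + (1 - t) • P y)‖) ∧
      (∀ x ∈ Kᶜ, t • x + (1 - t) • P x ∈ Kᶜ) := by
  choose P hPK hP using exists_norm_eq_iInf_of_complete_convex hne hKc.isComplete hK
  have hin : ∀ x, ∀ w ∈ K, inner ℝ (x - P x) (w - P x) ≤ 0 := fun x =>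
    (norm_eq_iInf_iff_real_inner_le_zero hK (hPK x)).1 (hP x)
  have hmono : ∀ x y, ‖P x - P y‖ ^ 2 ≤ inner ℝ (x - y) (P x - P y) := by
    intro x y
    have h1 := hin x (P y) (hPK y)
    have h2 := hin y (P x) (hPK x)
    rw [← real_inner_self_eq_norm_sq]
    simp only [inner_sub_left, inner_sub_right] at *
    linarith
  refine ⟨P, ?_, hPK, fun t ht0 ht1 => ⟨fun x y => ?_, fun x hx hTx => ?_⟩⟩
  · have : LipschitzWith 1 P := by
      refine LipschitzWith.of_dist_le_mul fun x y => ?_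
      rw [dist_eq_norm, dist_eq_norm, NNReal.coe_one, one_mul]
      have h1 := (hmono x y).trans (real_inner_le_norm _ _)
      by_contra! h
      nlinarith [norm_nonneg (x - y), norm_nonneg (P x - P y)]
    exact this.continuous
  · have e : (t • x + (1 - t) • P x) - (t • y + (1 - t) • P y)
        = t • (x - y) + (1 - t) • (P x - P y) := by module
    rw [e]
    apply le_of_sq_le_sq _ (norm_nonneg _)
    rw [norm_add_sq_real, norm_smul, norm_smul, Real.norm_of_nonneg ht0.le, inner_smul_left,
      inner_smul_right]
    have h1 := (sq_nonneg _).trans (hmono x y)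
    have h2 : 0 ≤ t * ((1 - t) * inner ℝ (x - y) (P x - P y)) :=
      mul_nonneg ht0.le (mul_nonneg (by linarith) h1)
    simp only [conj_trivial]
    nlinarith [sq_nonneg (‖1 - t‖ * ‖P x - P y‖)]
  · have h1 := hin x _ hTx
    have e : t • x + (1 - t) • P x - P x = t • (x - P x) := by module
    rw [e, inner_smul_right, real_inner_self_eq_norm_sq] at h1
    have h2 : ‖x - P x‖ ^ 2 ≤ 0 := by
      by_contra! h
      nlinarith [mul_pos ht0 h]
    have h3 : ‖x - P x‖ = 0 := by nlinarith [norm_nonneg (x - P x)]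
    rw [norm_eq_zero, sub_eq_zero] at h3
    exact hx (h3 ▸ hPK x)

/-- The zero level set of a convex function taking negative values is null. -/
lemma volume_zero_level {d : ℕ} {φ : EuclideanSpace ℝ (Fin d) → ℝ} (hφ : ConvexOn ℝ Set.univ φ)
    {y : EuclideanSpace ℝ (Fin d)} (hy : φ y < 0) : volume {x | φ x = 0} = 0 := by
  have hC : Convex ℝ {x | φ x ≤ 0} := by simpa using hφ.convex_le 0
  refine measure_mono_null (fun z hz => ?_) (hC.addHaar_frontier volume)
  have hz : φ z = 0 := hz
  refine ⟨subset_closure hz.le, fun hgint => ?_⟩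
  have hcont : Filter.Tendsto (fun s : ℝ => z + s • (z - y)) (nhdsWithin 0 (Set.Ioi 0)) (nhds z) := by
    apply Filter.Tendsto.mono_left _ nhdsWithin_le_nhds
    have : Continuous (fun s : ℝ => z + s • (z - y)) := by fun_prop
    simpa using this.tendsto 0
  have hev := hcont.eventually (mem_interior_iff_mem_nhds.1 hgint)
  obtain ⟨s, hs, hs0⟩ := (hev.and self_mem_nhdsWithin).exists
  have hs0 : 0 < s := hs0
  have hs : φ (z + s • (z - y)) ≤ 0 := hs
  have hp1 : 0 ≤ 1 / (1 + s) := by positivity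
  have hp2 : 0 ≤ s / (1 + s) := by positivity
  have h := hφ.2 (Set.mem_univ (z + s • (z - y))) (Set.mem_univ y) hp1 hp2 (by field_simp)
  have e : (1 / (1 + s)) • (z + s • (z - y)) + (s / (1 + s)) • y = z := by
    have : (1 / (1 + s)) • (z + s • (z - y)) + (s / (1 + s)) • y = ((1 + s) / (1 + s)) • z := by
      module
    rw [this, div_self (by positivity), one_smul]
  rw [e, hz, smul_eq_mul, smul_eq_mul] at h
  have h1 : 1 / (1 + s) * φ (z + s • (z - y)) ≤ 0 :=
    mul_nonpos_of_nonneg_of_nonpos (by positivity) hs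
  have h2 : s / (1 + s) * φ y < 0 := mul_neg_of_pos_of_neg (by positivity) hy
  linarith

theorem entropy_between_neg_log_density_at_zero {d : ℕ}
    (f : EuclideanSpace ℝ (Fin d) → ℝ)
    (hf : IsDensity f) (hiso : Isotropic f) (hlc : LogConcave f) :
    -Real.log (f 0) ≤ Ent f ∧ Ent f ≤ -Real.log (f 0) + d := by
  obtain ⟨hf0, hfm, hf1⟩ := hf
  obtain ⟨hmean, hcov⟩ := hiso
  have hfi : Integrable f := by
    by_contra h
    rw [integral_undef h] at hf1
    exact zero_ne_one hf1
  have hxi : ∀ i : Fin d, Integrable (fun x : EuclideanSpace ℝ (Fin d) => f x * x i) := by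
    intro i
    have h1 : Integrable (fun x : EuclideanSpace ℝ (Fin d) => f x * (x i * x i)) := by
      by_contra h
      have := hcov i i
      rw [integral_undef h] at this
      simp at this
    refine (hfi.add h1).mono' (by fun_prop) (Filter.Eventually.of_forall fun x => ?_)
    simp only [Pi.add_apply, Real.norm_eq_abs]
    rw [abs_mul, abs_of_nonneg (hf0 x), ← mul_one_add]
    gcongr
    · exact hf0 x
    · nlinarith [sq_abs (x i), sq_nonneg (|x i| - 1)]
  have hfx : Integrable (fun x : EuclideanSpace ℝ (Fin d) => f x • x) := by
    have h := integrable_finsetSum Finset.univ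
      (fun i _ => (hxi i).smul_const (EuclideanSpace.single i (1:ℝ)))
    refine h.congr (Filter.Eventually.of_forall fun x => ?_)
    ext j
    simp [Finset.sum_apply, Pi.single_apply]
  set φ : EuclideanSpace ℝ (Fin d) → ℝ := fun x => -Real.log (f x) with hφdef
  have hφ : ConvexOn ℝ Set.univ φ := hlc
  have hφc : Continuous φ := hφ.locallyLipschitz.continuous
  have hexp : ∀ x, f x ≠ 0 → f x = exp (-φ x) := by
    intro x hx
    simp only [hφdef, neg_neg]
    rw [exp_log (lt_of_le_of_ne (hf0 x) hx.symm)]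
  have hzero : ∀ x, f x = 0 → φ x = 0 := by
    intro x hx
    simp [hφdef, hx]
  have hEnt : Ent f = ∫ x, f x * φ x := by
    simp only [Ent, hφdef, mul_neg, integral_neg]
  -- affine minorants
  have haff : ∀ ε : ℝ, 0 < ε → ∃ l : EuclideanSpace ℝ (Fin d) →L[ℝ] ℝ,
      ∀ x, φ 0 - ε + l x ≤ φ x := by
    intro ε hε
    obtain ⟨l, c, h1, h2⟩ := hφ.exists_affine_le_of_lt (𝕜 := ℝ) (Set.mem_univ 0)
      (show φ 0 - ε < φ 0 by linarith) isClosed_univ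
      (hφc.lowerSemicontinuous.lowerSemicontinuousOn _)
    refine ⟨l, fun x => ?_⟩
    have h3 := h1 ⟨x, Set.mem_univ x⟩
    simp at h2 h3
    linarith
  have hfl : ∀ l : EuclideanSpace ℝ (Fin d) →L[ℝ] ℝ, Integrable (fun x => f x * l x) ∧
      ∫ x, f x * l x = 0 := by
    intro l
    have h1 : (fun x => f x * l x) = fun x => l (f x • x) := by
      ext x; simp
    rw [h1]
    refine ⟨l.integrable_comp hfx, ?_⟩
    rw [l.integral_comp_comm hfx, hmean, map_zero]
  -- it suffices to have integrability and the upper bound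
  suffices H : Integrable (fun x => f x * φ x) ∧ ∫ x, f x * φ x ≤ φ 0 + d by
    rw [hEnt]
    refine ⟨?_, H.2⟩
    refine le_of_forall_pos_le_add fun ε hε => ?_
    obtain ⟨l, hl⟩ := haff ε hε
    have h1 : ∫ x, (f x * (φ 0 - ε) + f x * l x) ≤ ∫ x, f x * φ x := by
      refine integral_mono ((hfi.mul_const _).add (hfl l).1) H.1 fun x => ?_
      have := mul_le_mul_of_nonneg_left (hl x) (hf0 x)
      simp only
      linarith
    rw [integral_add (hfi.mul_const _) (hfl l).1, integral_mul_const, hf1, (hfl l).2] at h1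
    change φ 0 ≤ _
    linarith
  by_cases hcase : (∃ y, φ y < 0) ∨ ∀ x, φ x ≠ 0
  · have hnull : ∀ᵐ x, f x ≠ 0 := by
      rcases hcase with ⟨y, hy⟩ | h
      · have := volume_zero_level hφ hy
        refine measure_mono_null (fun x hx => ?_) this
        exact hzero x (by simpa using hx)
      · exact Filter.Eventually.of_forall fun x hx => h x (hzero x hx)
    have hae : f =ᵐ[volume] fun x => exp (-φ x) := by
      filter_upwards [hnull] with x hx using hexp x hx
    obtain ⟨l, hl⟩ := haff 1 one_pos
    have hgi : Integrable (fun x => exp (-φ x)) := hfi.congr hae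
    have hgl : Integrable (fun x => exp (-φ x) * l x) := by
      refine (hfl l).1.congr ?_
      filter_upwards [hae] with x hx
      rw [hx]
    have hmain := scaling_main hφc MeasurableSet.univ (φ 0) (fun t ht0 ht1 =>
      ⟨fun x => t • x, by fun_prop, fun x y => by
        rw [← smul_sub, norm_smul, Real.norm_of_nonneg ht0.le], fun _ _ => Set.mem_univ _,
        fun x _ => by
          have := hφ.2 (Set.mem_univ x) (Set.mem_univ 0) ht0.le (sub_nonneg.2 ht1.le) (by ring)
          simpa using this⟩)
      (by simpa using hgi) (fun x => exp (-φ x) * (-1) + exp (-φ x) * l x)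
      (integrableOn_univ.2 ((hgi.mul_const _).add hgl))
      (fun x _ => by
        rw [← mul_add]
        have := hl x
        gcongr
        linarith)
    simp only [integrableOn_univ, Measure.restrict_univ] at hmain
    obtain ⟨hm1, hm2⟩ := hmain
    rw [← integral_congr_ae hae, hf1, mul_one] at hm2
    have hae2 : (fun x => f x * φ x) =ᵐ[volume]
        fun x => exp (-φ x) * (φ x - φ 0) + exp (-φ x) * φ 0 := by
      filter_upwards [hae] with x hx
      rw [hx]; ring
    refine ⟨(hm1.add (hgi.mul_const _)).congr hae2.symm, ?_⟩
    rw [integral_congr_ae hae2, integral_add hm1 (hgi.mul_const _), integral_mul_const,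
      ← integral_congr_ae hae, hf1]
    linarith
  · push Not at hcase
    obtain ⟨hnn, z, hz⟩ := hcase
    set K : Set (EuclideanSpace ℝ (Fin d)) := {x | φ x ≤ 0} with hKdef
    have hK : Convex ℝ K := by simpa using hφ.convex_le 0
    have hKc : IsClosed K := isClosed_le hφc continuous_const
    have hKφ : ∀ x ∈ K, φ x = 0 := fun x hx => le_antisymm hx (hnn x)
    obtain ⟨P, hPc, hPK, hP⟩ := exists_contraction hK hKc ⟨z, hz.le⟩
    have hSm : MeasurableSet Kᶜ := hKc.measurableSet.compl
    have hfS : ∀ x ∈ Kᶜ, f x = exp (-φ x) := fun x hx => hexp x fun h => hx (hzero x h).le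
    have hgi : IntegrableOn (fun x => exp (-φ x)) Kᶜ :=
      (integrableOn_congr_fun hfS hSm).1 hfi.integrableOn
    have hmain := scaling_main hφc hSm 0 (fun t ht0 ht1 =>
      ⟨fun x => t • x + (1 - t) • P x, by fun_prop, (hP t ht0 ht1).1, (hP t ht0 ht1).2,
        fun x _ => by
          have := hφ.2 (Set.mem_univ x) (Set.mem_univ (P x)) ht0.le (sub_nonneg.2 ht1.le) (by ring)
          rw [hKφ _ (hPK x)] at this
          simpa using this⟩)
      hgi (fun _ => 0) integrableOn_zero
      (fun x _ => by
        rw [sub_zero]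
        exact mul_nonneg (exp_pos _).le (hnn x))
    simp only [sub_zero] at hmain
    obtain ⟨hm1, hm2⟩ := hmain
    have heq : (fun x => f x * φ x) = Kᶜ.indicator (fun x => exp (-φ x) * φ x) := by
      ext x
      by_cases hx : x ∈ K
      · rw [Set.indicator_of_notMem (by simpa using hx), hKφ x hx, mul_zero]
      · rw [Set.indicator_of_mem hx, hfS x hx]
    rw [heq]
    refine ⟨hm1.integrable_indicator hSm, ?_⟩
    rw [integral_indicator hSm]
    have hle : ∫ x in Kᶜ, exp (-φ x) ≤ 1 := by
      rw [← setIntegral_congr_fun hSm hfS, ← hf1]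
      exact setIntegral_le_integral hfi (Filter.Eventually.of_forall hf0)
    have h0 := hnn 0
    have : (d:ℝ) * ∫ x in Kᶜ, exp (-φ x) ≤ d * 1 := by gcongr
    linarith
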